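/- arXiv:2412.01951 — 2 statements merged into one kernel-verified Lean document; each statement's English description precedes it below -/
import Mathlib

section
/- There is an absolute constant c > 0 with the following property. Let X be a prompt set with probability distribution μ, Y a finite response set, π_base a conditional distribution with π_base(y|x) > 0 for all x, y, and β ∈ (0,1]. Define π*_β(y|x) ∝ π_base(y|x)^{1+1/β}, let π̂ be a model with π̂(y|x) > 0 everywhere, and set r*(x,y) := log π_base(y|x), r̂(x,y) := β·log(π̂(y|x)/π_base(y|x)), and Δ^r(x,y,y') := r(x,y) − r(x,y'). For a model π set C_π := E_{x∼μ, y∼π(·|x)}[π(y|x)/π_base(y|x)] and C^β(π_base‖π') := E_{x∼μ, y∼π_base(·|x)}[(π_base(y|x)/π'(y|x))^β]. Then for every model π and every η > 0: E_{x∼μ, y∼π(·|x), y'∼π_base(·|x)}[|Δ^{r*}(x,y,y') − Δ^{r̂}(x,y,y')|] ≤ c·C_π^{1/2}·(E_{x∼μ, y,y'∼π_base(·|x)}[(Δ^{r*}−Δ^{r̂})^2·1{|Δ^{r*}|≤η and |Δ^{r̂}|≤η}])^{1/2} + c·C_π^{1/2}·(1 + log C^β(π_base‖π̂) + log C^β(π_base‖π*_β))·(P_{x∼μ,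 y,y'∼π_base(·|x)}[|Δ^{r*}| > η] + P_{x∼μ, y,y'∼π_base(·|x)}[|Δ^{r̂}| > η])^{1/4}. -/
open MeasureTheory Finset
open scoped ENNReal Classical

/-!
Let `w = π / π_base`, let `D = Δ^{r*} - Δ^{r̂}`, and let `ν` be the law of `(x, y, y')` with `y, y'`
drawn from `π_base`. A change of measure and Cauchy–Schwarz bound the left-hand side by
`‖w‖₂ * ‖D‖₂`, where `‖w‖₂ = C_π ^ (1/2)`. Off the event `G` where both gaps are at most `η`,
Hölder's inequality gives `‖D 1_{Gᶜ}‖₂ ≤ ‖D‖₄ * ν(Gᶜ) ^ (1/4)`.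

For `‖D‖₄`, the point is that `log π_base` differs only by a function of the prompt from the
implicit reward `β * log (π*_β / π_base)` of `π*_β`, so that `D` is a signed sum of four variables
`Z = β * log (ρ / π_base)`, with `ρ` one of `π*_β` and `π̂`. Under `π_base`, such a `Z` has
`E[e^Z] ≤ 1` because `β ≤ 1`, and `E[e^{-Z}] = C^β(π_base‖ρ)`; comparing `|Z| - log C^β` with its
exponential gives `‖Z‖₄ ≤ log C^β + 3`.
-/

open ProbabilityTheory

section Lp

lemma max_zero_pow_le_factorial_mul_exp (t : ℝ) {n : ℕ} (hn : n ≠ 0) :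
    max t 0 ^ n ≤ n.factorial * Real.exp t := by
  rcases le_total t 0 with h | h
  · rw [max_eq_right h, zero_pow hn]
    positivity
  · rw [max_eq_left h, ← div_le_iff₀' (by positivity)]
    exact Real.pow_div_factorial_le_exp t h n

variable {Ω : Type*} [MeasurableSpace Ω] {ν : Measure Ω}

lemma eLpNorm_le_ofReal_add_lintegral_exp [IsProbabilityMeasure ν] {Z : Ω → ℝ}
    (hZ : AEStronglyMeasurable Z ν) (a : ℝ) {n : ℕ} (hn : n ≠ 0) :
    eLpNorm Z n ν ≤ ENNReal.ofReal a +
      (n.factorial * ∫⁻ ω, ENNReal.ofReal (Real.exp (|Z ω| - a)) ∂ν) ^ (1 / n : ℝ) := by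
  have hn1 : (1 : ℝ≥0∞) ≤ n := by exact_mod_cast Nat.one_le_iff_ne_zero.2 hn
  have hmeas : AEStronglyMeasurable (fun ω => max (|Z ω| - a) 0) ν :=
    ((hZ.norm.sub aestronglyMeasurable_const).sup aestronglyMeasurable_const)
  have hsplit : eLpNorm Z n ν ≤
      eLpNorm ((fun _ => max a 0) + fun ω => max (|Z ω| - a) 0) n ν := by
    refine eLpNorm_mono_real fun ω => ?_
    have := le_max_left a 0
    have := le_max_left (|Z ω| - a) 0
    simp only [Real.norm_eq_abs, Pi.add_apply]
    linarith
  have hconst : eLpNorm (fun _ : Ω => max a 0) n ν = ENNReal.ofReal a := by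
    rw [eLpNorm_const _ (by exact_mod_cast hn) (IsProbabilityMeasure.ne_zero ν), measure_univ,
      ENNReal.one_rpow, mul_one, Real.enorm_eq_ofReal (le_max_right a 0), ENNReal.ofReal_max,
      ENNReal.ofReal_zero, max_eq_left zero_le]
  have hexp (ω) : ‖max (|Z ω| - a) 0‖ₑ ^ (n : ℝ) ≤
      n.factorial * ENNReal.ofReal (Real.exp (|Z ω| - a)) := by
    have h0 := le_max_right (|Z ω| - a) 0
    rw [Real.enorm_eq_ofReal h0, ENNReal.rpow_natCast, ← ENNReal.ofReal_pow h0,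
      ← ENNReal.ofReal_natCast, ← ENNReal.ofReal_mul (by positivity)]
    exact ENNReal.ofReal_le_ofReal (max_zero_pow_le_factorial_mul_exp _ hn)
  have hexcess : eLpNorm (fun ω => max (|Z ω| - a) 0) n ν ≤
      (n.factorial * ∫⁻ ω, ENNReal.ofReal (Real.exp (|Z ω| - a)) ∂ν) ^ (1 / n : ℝ) := by
    rw [eLpNorm_eq_lintegral_rpow_enorm_toReal (by exact_mod_cast hn) (ENNReal.natCast_ne_top n),
      ENNReal.toReal_natCast, ← lintegral_const_mul' _ _ (ENNReal.natCast_ne_top _)]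
    gcongr with ω
    exact hexp ω
  calc eLpNorm Z n ν ≤ _ := hsplit
    _ ≤ _ := eLpNorm_add_le aestronglyMeasurable_const hmeas hn1
    _ ≤ _ := add_le_add hconst.le hexcess

lemma one_le_integral_exp_neg [IsProbabilityMeasure ν] {Z : Ω → ℝ}
    (hpos : Integrable (fun ω => Real.exp (Z ω)) ν)
    (hneg : Integrable (fun ω => Real.exp (-Z ω)) ν) (hle : ∫ ω, Real.exp (Z ω) ∂ν ≤ 1) :
    1 ≤ ∫ ω, Real.exp (-Z ω) ∂ν := by
  have htwo : ∫ _, (2 : ℝ) ∂ν ≤ ∫ ω, (Real.exp (Z ω) + Real.exp (-Z ω)) ∂ν :=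
    integral_mono (integrable_const _) (hpos.add hneg) fun ω => by
      simp only; linarith [Real.add_one_le_exp (Z ω), Real.add_one_le_exp (-Z ω)]
  rw [integral_add hpos hneg, integral_const, probReal_univ, one_smul] at htwo
  linarith

lemma eLpNorm_four_le_log_integral_exp_neg [IsProbabilityMeasure ν] {Z : Ω → ℝ}
    (hZ : AEStronglyMeasurable Z ν) (hpos : Integrable (fun ω => Real.exp (Z ω)) ν)
    (hneg : Integrable (fun ω => Real.exp (-Z ω)) ν) (hle : ∫ ω, Real.exp (Z ω) ∂ν ≤ 1) :
    eLpNorm Z 4 ν ≤ ENNReal.ofReal (Real.log (∫ ω, Real.exp (-Z ω) ∂ν) + 3) := by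
  set C := ∫ ω, Real.exp (-Z ω) ∂ν
  have hC : 1 ≤ C := one_le_integral_exp_neg hpos hneg hle
  have hmoment : ∫⁻ ω, ENNReal.ofReal (Real.exp (|Z ω| - Real.log C)) ∂ν ≤ 2 := by
    calc _ ≤ ∫⁻ ω, ENNReal.ofReal ((Real.exp (Z ω) + Real.exp (-Z ω)) / C) ∂ν := by
          gcongr with ω
          rw [Real.exp_sub, Real.exp_log (by linarith)]
          gcongr
          exact Real.exp_abs_le _
      _ = ENNReal.ofReal (((∫ ω, Real.exp (Z ω) ∂ν) + C) / C) := by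
          rw [← integral_add hpos hneg, ← integral_div]
          exact (ofReal_integral_eq_lintegral_ofReal ((hpos.add hneg).div_const C)
            (.of_forall fun ω => by simp only [Pi.add_apply, Pi.zero_apply]; positivity)).symm
      _ ≤ ENNReal.ofReal 2 := by
          gcongr
          rw [div_le_iff₀ (by linarith)]
          linarith
      _ = 2 := ENNReal.ofReal_ofNat 2
  have hroot : ((Nat.factorial 4 : ℝ≥0∞) * 2) ^ (1 / (4 : ℕ) : ℝ) ≤ ENNReal.ofReal 3 := by
    rw [one_div, ENNReal.rpow_inv_le_iff (by norm_num), ENNReal.rpow_natCast,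
      ENNReal.ofReal_ofNat]
    norm_num [Nat.factorial]
  calc eLpNorm Z 4 ν ≤ _ :=
        eLpNorm_le_ofReal_add_lintegral_exp hZ (Real.log C) four_ne_zero
    _ ≤ ENNReal.ofReal (Real.log C) + ((Nat.factorial 4 : ℝ≥0∞) * 2) ^ (1 / (4 : ℕ) : ℝ) := by
        gcongr
    _ ≤ ENNReal.ofReal (Real.log C) + ENNReal.ofReal 3 := by gcongr
    _ = _ := (ENNReal.ofReal_add (Real.log_nonneg hC) (by norm_num)).symm

lemma eLpNorm_le_eLpNorm_restrict_add {E : Type*} [NormedAddCommGroup E] {f : Ω → E}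
    (hf : AEStronglyMeasurable f ν) {p q : ℝ≥0∞} (hp : 1 ≤ p) (hpq : p ≤ q) {G : Set Ω}
    (hG : MeasurableSet G) :
    eLpNorm f p ν ≤ eLpNorm f p (ν.restrict G) +
      eLpNorm f q ν * ν Gᶜ ^ (1 / p.toReal - 1 / q.toReal) := by
  have hbad := eLpNorm_le_eLpNorm_mul_rpow_measure_univ hpq (hf.restrict (s := Gᶜ))
  rw [Measure.restrict_apply_univ] at hbad
  calc eLpNorm f p ν = eLpNorm (G.indicator f + Gᶜ.indicator f) p ν := by
        rw [Set.indicator_self_add_compl]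
    _ ≤ eLpNorm (G.indicator f) p ν + eLpNorm (Gᶜ.indicator f) p ν :=
        eLpNorm_add_le (hf.indicator hG) (hf.indicator hG.compl) hp
    _ ≤ _ := by
        rw [eLpNorm_indicator_eq_eLpNorm_restrict hG,
          eLpNorm_indicator_eq_eLpNorm_restrict hG.compl]
        exact add_le_add le_rfl (hbad.trans (mul_le_mul_left (eLpNorm_restrict_le f q ν Gᶜ) _))

lemma toReal_eLpNorm_two {f : Ω → ℝ} (hf : AEStronglyMeasurable f ν) :
    (eLpNorm f 2 ν).toReal = √(∫ ω, f ω ^ 2 ∂ν) := by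
  rw [toReal_eLpNorm hf, lpNorm_eq_integral_norm_rpow_toReal two_ne_zero ENNReal.ofNat_ne_top hf,
    Real.sqrt_eq_rpow]
  simp

lemma sqrt_integral_sq_le_sqrt_setIntegral_sq_add [IsFiniteMeasure ν] {f : Ω → ℝ}
    (hf : MemLp f 4 ν) {G : Set Ω} (hG : MeasurableSet G) :
    √(∫ ω, f ω ^ 2 ∂ν) ≤ √(∫ ω in G, f ω ^ 2 ∂ν) +
      (eLpNorm f 4 ν).toReal * ν.real Gᶜ ^ (1 / 4 : ℝ) := by
  have hf2 : MemLp f 2 ν := hf.mono_exponent (by norm_num)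
  have hle := eLpNorm_le_eLpNorm_restrict_add hf.1 one_le_two (q := 4) (by norm_num) hG
  have hexp : 1 / (2 : ℝ≥0∞).toReal - 1 / (4 : ℝ≥0∞).toReal = 1 / 4 := by norm_num
  have hfin : eLpNorm f 4 ν * ν Gᶜ ^ (1 / 4 : ℝ) ≠ ∞ :=
    ENNReal.mul_ne_top hf.2.ne (ENNReal.rpow_ne_top_of_nonneg (by norm_num) (measure_ne_top _ _))
  rw [hexp] at hle
  have hres : eLpNorm f 2 (ν.restrict G) ≠ ∞ := (hf2.restrict G).2.ne
  rw [← toReal_eLpNorm_two hf.1, ← toReal_eLpNorm_two hf.1.restrict, Measure.real,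
    ENNReal.toReal_rpow, ← ENNReal.toReal_mul, ← ENNReal.toReal_add hres hfin]
  exact ENNReal.toReal_mono (ENNReal.add_ne_top.2 ⟨hres, hfin⟩) hle

lemma integral_mul_abs_le_sqrt_mul [IsFiniteMeasure ν] {w f : Ω → ℝ} (hw0 : 0 ≤ w)
    (hw : MemLp w 2 ν) (hf : MemLp f 4 ν) {G : Set Ω} (hG : MeasurableSet G) :
    ∫ ω, w ω * |f ω| ∂ν ≤ √(∫ ω, w ω ^ 2 ∂ν) *
      (√(∫ ω in G, f ω ^ 2 ∂ν) + (eLpNorm f 4 ν).toReal * ν.real Gᶜ ^ (1 / 4 : ℝ)) := by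
  have hf2 : MemLp f 2 ν := hf.mono_exponent (by norm_num)
  calc ∫ ω, w ω * |f ω| ∂ν ≤ √(∫ ω, w ω ^ 2 ∂ν) * √(∫ ω, f ω ^ 2 ∂ν) := by
        have hCS := integral_mul_le_Lp_mul_Lq_of_nonneg Real.HolderConjugate.two_two
          (.of_forall hw0) (.of_forall fun ω => abs_nonneg (f ω))
          (by simpa only [ENNReal.ofReal_ofNat] using hw)
          (by simpa only [ENNReal.ofReal_ofNat, Real.norm_eq_abs] using hf2.norm)
        simpa only [Real.rpow_two, sq_abs, ← Real.sqrt_eq_rpow] using hCS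
    _ ≤ _ := by
        gcongr
        exact sqrt_integral_sq_le_sqrt_setIntegral_sq_add hf hG

lemma measurableSet_setOf_abs_le_and_abs_le {f g : Ω → ℝ} (hf : Measurable f) (hg : Measurable g)
    (η : ℝ) : MeasurableSet {ω | |f ω| ≤ η ∧ |g ω| ≤ η} :=
  (measurableSet_le hf.abs measurable_const).inter (measurableSet_le hg.abs measurable_const)

lemma integral_mul_abs_sub_le_sqrt_mul [IsFiniteMeasure ν] {w f g : Ω → ℝ} (hw0 : 0 ≤ w)
    (hw : MemLp w 2 ν) (hf : Measurable f) (hg : Measurable g) (hfg : MemLp (f - g) 4 ν) (η : ℝ) :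
    ∫ ω, w ω * |(f - g) ω| ∂ν ≤ √(∫ ω, w ω ^ 2 ∂ν) *
      (√(∫ ω in {ω | |f ω| ≤ η ∧ |g ω| ≤ η}, (f - g) ω ^ 2 ∂ν) + (eLpNorm (f - g) 4 ν).toReal *
        (ν.real {ω | η < |f ω|} + ν.real {ω | η < |g ω|}) ^ (1 / 4 : ℝ)) := by
  have htail : {ω | |f ω| ≤ η ∧ |g ω| ≤ η}ᶜ = {ω | η < |f ω|} ∪ {ω | η < |g ω|} := by
    ext ω
    simp only [Set.mem_compl_iff, Set.mem_ofPred_eq, Set.mem_union, not_and_or, not_le]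
  calc _ ≤ _ := integral_mul_abs_le_sqrt_mul hw0 hw hfg
        (measurableSet_setOf_abs_le_and_abs_le hf hg η)
    _ ≤ _ := by
        rw [htail]
        gcongr
        exact measureReal_union_le _ _

end Lp

section Models

variable {X Y : Type*} {π πb : X → Y → ℝ} {β : ℝ}

/-- The reward `r(x, y) = β * log (π(y|x) / π_base(y|x))` that makes `π` the KL-regularized optimal
model with reference `π_base` and temperature `β`. -/
noncomputable def implicitReward (β : ℝ) (πb π : X → Y → ℝ) : X → Y → ℝ := fun x y =>
  β * Real.log (π x y / πb x y)

/-- `r` is the implicit reward of `π` up to a shift `b` that depends only on the prompt; such a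
shift changes neither the optimal model nor the reward gaps. -/
def IsImplicitReward (β : ℝ) (πb π r : X → Y → ℝ) : Prop :=
  ∃ b : X → ℝ, ∀ x y, r x y = implicitReward β πb π x y + b x

lemma isImplicitReward_implicitReward (β : ℝ) (πb π : X → Y → ℝ) :
    IsImplicitReward β πb π (implicitReward β πb π) :=
  ⟨0, fun _ _ => (add_zero _).symm⟩

variable [Fintype Y]

/-- The model `π_base(y|x) ^ s / ∑ y', π_base(y'|x) ^ s`; the paper's `π*_β` has exponent
`s = 1 + 1 / β`. -/
noncomputable def sharpenedModel (πb : X → Y → ℝ) (s : ℝ) : X → Y → ℝ := fun x y =>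
  πb x y ^ s / ∑ y', πb x y' ^ s

lemma sum_rpow_pos [Nonempty Y] (hb : ∀ x y, 0 < πb x y) (s : ℝ) (x : X) :
    0 < ∑ y, πb x y ^ s :=
  Finset.sum_pos (fun y _ => Real.rpow_pos_of_pos (hb x y) s) univ_nonempty

lemma isImplicitReward_log_sharpenedModel [Nonempty Y] (hb : ∀ x y, 0 < πb x y) (hβ : β ≠ 0) :
    IsImplicitReward β πb (sharpenedModel πb (1 + 1 / β)) fun x y => Real.log (πb x y) := by
  refine ⟨fun x => β * Real.log (∑ y, πb x y ^ (1 + 1 / β)), fun x y => ?_⟩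
  have hpow := Real.rpow_pos_of_pos (hb x y) (1 + 1 / β)
  have hZ := sum_rpow_pos hb (1 + 1 / β) x
  rw [implicitReward, sharpenedModel, Real.log_div (div_pos hpow hZ).ne' (hb x y).ne',
    Real.log_div hpow.ne' hZ.ne', Real.log_rpow (hb x y)]
  field_simp
  ring

variable [MeasurableSpace X]

/-- A model `π(y|x)` that gives positive probability to every response, stored as the function
`x y ↦ π(y|x)`. -/
structure IsPositiveModel (π : X → Y → ℝ) : Prop where
  pos : ∀ x y, 0 < π x y
  sum_eq_one : ∀ x, ∑ y, π x y = 1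
  measurable : ∀ y, Measurable fun x => π x y

lemma isPositiveModel_sharpenedModel [Nonempty Y] (hb : ∀ x y, 0 < πb x y)
    (hm : ∀ y, Measurable fun x => πb x y) (s : ℝ) : IsPositiveModel (sharpenedModel πb s) where
  pos x y := div_pos (Real.rpow_pos_of_pos (hb x y) s) (sum_rpow_pos hb s x)
  sum_eq_one x := by
    simp only [sharpenedModel, ← Finset.sum_div]
    exact div_self (sum_rpow_pos hb s x).ne'
  measurable y := by
    unfold sharpenedModel
    fun_prop

end Models

section FiniteKernel

variable {X Z : Type*} [MeasurableSpace X] [MeasurableSpace Z] [Fintype Z]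
  [MeasurableSingletonClass Z] {μ : Measure X} [SFinite μ] {κ : Kernel X Z} [IsFiniteKernel κ]
  {f : X × Z → ℝ}

lemma integrable_compProd_iff_integrable_sum (hf : Measurable f) (hf0 : 0 ≤ f) :
    Integrable f (μ ⊗ₘ κ) ↔ Integrable (fun x => ∑ z, (κ x).real {z} * f (x, z)) μ := by
  rw [Measure.integrable_compProd_iff hf.aestronglyMeasurable,
    and_iff_right (.of_forall fun _ => .of_finite)]
  simp only [integral_fintype .of_finite, Real.norm_of_nonneg (hf0 _), smul_eq_mul]

lemma integral_compProd_eq_integral_sum (hf : Measurable f) (hf0 : 0 ≤ f) :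
    ∫ ω, f ω ∂(μ ⊗ₘ κ) = ∫ x, ∑ z, (κ x).real {z} * f (x, z) ∂μ := by
  by_cases hint : Integrable f (μ ⊗ₘ κ)
  · simp only [Measure.integral_compProd hint, integral_fintype .of_finite, smul_eq_mul]
  · rw [integral_undef hint,
      integral_undef ((integrable_compProd_iff_integrable_sum hf hf0).not.1 hint)]

end FiniteKernel

section Laws

variable {X Y : Type*} [MeasurableSpace X] [Fintype Y] [MeasurableSpace Y]

/-- The kernel `x ↦ π(·|x)` of a model. -/
noncomputable def modelKernel (π : X → Y → ℝ) : Kernel X Y :=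
  Kernel.withDensity (Kernel.const X Measure.count) fun x y => ENNReal.ofReal (π x y)

/-- The law of `(x, y)` for `x ∼ μ` and `y ∼ π(·|x)`. -/
noncomputable def responseLaw (μ : Measure X) (π : X → Y → ℝ) : Measure (X × Y) :=
  μ ⊗ₘ modelKernel π

/-- The law of `(x, y, y')` for `x ∼ μ` and `y, y' ∼ π(·|x)` independent given `x`. -/
noncomputable def responsePairLaw (μ : Measure X) (π : X → Y → ℝ) : Measure (X × Y × Y) :=
  μ ⊗ₘ (modelKernel π ×ₖ modelKernel π)

variable [MeasurableSingletonClass Y] {μ : Measure X} {π : X → Y → ℝ}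

lemma IsPositiveModel.measurable_uncurry (h : IsPositiveModel π) :
    Measurable (Function.uncurry π) :=
  measurable_from_prod_countable_left h.measurable

lemma IsPositiveModel.modelKernel_singleton (h : IsPositiveModel π) (x : X) (y : Y) :
    modelKernel π x {y} = ENNReal.ofReal (π x y) := by
  rw [modelKernel, Kernel.withDensity_apply _ h.measurable_uncurry.ennreal_ofReal,
    withDensity_apply _ (measurableSet_singleton y), Kernel.const_apply, lintegral_singleton,
    Measure.count_singleton, mul_one]

lemma IsPositiveModel.isMarkovKernel (h : IsPositiveModel π) : IsMarkovKernel (modelKernel π) where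
  isProbabilityMeasure x := ⟨by
    rw [← setLIntegral_one, setLIntegral_univ, lintegral_fintype]
    simp only [one_mul, h.modelKernel_singleton]
    rw [← ENNReal.ofReal_sum_of_nonneg fun y _ => (h.pos x y).le, h.sum_eq_one,
      ENNReal.ofReal_one]⟩

lemma IsPositiveModel.modelKernel_real_singleton (h : IsPositiveModel π) (x : X) (y : Y) :
    (modelKernel π x).real {y} = π x y := by
  rw [Measure.real, h.modelKernel_singleton, ENNReal.toReal_ofReal (h.pos x y).le]

lemma IsPositiveModel.prod_modelKernel_real_singleton (h : IsPositiveModel π) (x : X) (z : Y × Y) :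
    ((modelKernel π ×ₖ modelKernel π) x).real {z} = π x z.1 * π x z.2 := by
  have := h.isMarkovKernel
  rw [Kernel.prod_apply, ← Set.singleton_prod_singleton, measureReal_prod_prod,
    h.modelKernel_real_singleton, h.modelKernel_real_singleton]

lemma IsPositiveModel.isProbabilityMeasure_responseLaw [IsProbabilityMeasure μ]
    (h : IsPositiveModel π) : IsProbabilityMeasure (responseLaw μ π) := by
  have := h.isMarkovKernel
  unfold responseLaw
  infer_instance

lemma IsPositiveModel.isProbabilityMeasure_responsePairLaw [IsProbabilityMeasure μ]
    (h : IsPositiveModel π) : IsProbabilityMeasure (responsePairLaw μ π) := by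
  have := h.isMarkovKernel
  unfold responsePairLaw
  infer_instance

section SFinite

variable [SFinite μ]

lemma IsPositiveModel.integrable_responseLaw_iff (h : IsPositiveModel π) {f : X × Y → ℝ}
    (hf : Measurable f) (hf0 : 0 ≤ f) :
    Integrable f (responseLaw μ π) ↔ Integrable (fun x => ∑ y, π x y * f (x, y)) μ := by
  have := h.isMarkovKernel
  simp only [responseLaw, integrable_compProd_iff_integrable_sum hf hf0,
    h.modelKernel_real_singleton]

lemma IsPositiveModel.integral_responseLaw (h : IsPositiveModel π) {f : X × Y → ℝ}
    (hf : Measurable f) (hf0 : 0 ≤ f) :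
    ∫ ω, f ω ∂(responseLaw μ π) = ∫ x, ∑ y, π x y * f (x, y) ∂μ := by
  have := h.isMarkovKernel
  simp only [responseLaw, integral_compProd_eq_integral_sum hf hf0, h.modelKernel_real_singleton]

lemma IsPositiveModel.integral_responsePairLaw (h : IsPositiveModel π) {f : X × Y × Y → ℝ}
    (hf : Measurable f) (hf0 : 0 ≤ f) :
    ∫ ω, f ω ∂(responsePairLaw μ π) =
      ∫ x, ∑ y, ∑ y', π x y * π x y' * f (x, y, y') ∂μ := by
  have := h.isMarkovKernel
  simp only [responsePairLaw, integral_compProd_eq_integral_sum hf hf0,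
    h.prod_modelKernel_real_singleton, Fintype.sum_prod_type]

lemma IsPositiveModel.setIntegral_responsePairLaw (h : IsPositiveModel π) {f : X × Y × Y → ℝ}
    (hf : Measurable f) (hf0 : 0 ≤ f) {S : Set (X × Y × Y)} [DecidablePred (· ∈ S)]
    (hS : MeasurableSet S) :
    ∫ ω in S, f ω ∂(responsePairLaw μ π) = ∫ x, ∑ y, ∑ y', π x y * π x y' *
      (f (x, y, y') * if (x, y, y') ∈ S then 1 else 0) ∂μ := by
  rw [← integral_indicator hS, h.integral_responsePairLaw (hf.indicator hS)
    (Set.indicator_nonneg fun ω _ => hf0 ω)]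
  simp only [Set.indicator_apply, mul_ite, mul_one, mul_zero]

lemma IsPositiveModel.responsePairLaw_real (h : IsPositiveModel π) {S : Set (X × Y × Y)}
    [DecidablePred (· ∈ S)] (hS : MeasurableSet S) :
    (responsePairLaw μ π).real S =
      ∫ x, ∑ y, ∑ y', π x y * π x y' * (if (x, y, y') ∈ S then 1 else 0) ∂μ := by
  simpa only [Pi.one_apply, one_mul, setIntegral_one_eq_measureReal] using
    h.setIntegral_responsePairLaw (f := 1) measurable_const zero_le_one hS

lemma IsPositiveModel.measurePreserving_fst_response (h : IsPositiveModel π) :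
    MeasurePreserving (Prod.map id Prod.fst) (responsePairLaw μ π) (responseLaw μ π) := by
  have := h.isMarkovKernel
  refine ⟨by fun_prop, ?_⟩
  rw [responsePairLaw, ← Measure.compProd_map measurable_fst, ← Kernel.fst_eq, Kernel.fst_prod,
    responseLaw]

lemma IsPositiveModel.measurePreserving_snd_response (h : IsPositiveModel π) :
    MeasurePreserving (Prod.map id Prod.snd) (responsePairLaw μ π) (responseLaw μ π) := by
  have := h.isMarkovKernel
  refine ⟨by fun_prop, ?_⟩
  rw [responsePairLaw, ← Measure.compProd_map measurable_snd, ← Kernel.snd_eq, Kernel.snd_prod,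
    responseLaw]

end SFinite

end Laws

section Rewards

lemma sum_mul_div_rpow_le_one {ι : Type*} [Fintype ι] {p q : ι → ℝ} (hp : ∀ i, 0 ≤ p i)
    (hq : ∀ i, 0 < q i) (hp1 : ∑ i, p i = 1) (hq1 : ∑ i, q i = 1) {s : ℝ} (hs0 : 0 ≤ s)
    (hs1 : s ≤ 1) : ∑ i, q i * (p i / q i) ^ s ≤ 1 := by
  have hbernoulli (i) : q i * (p i / q i) ^ s ≤ q i + s * (p i - q i) := by
    have h := rpow_one_add_le_one_add_mul_self (s := p i / q i - 1)
      (by linarith [div_nonneg (hp i) (hq i).le]) hs0 hs1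
    rw [add_sub_cancel] at h
    calc q i * (p i / q i) ^ s ≤ q i * (1 + s * (p i / q i - 1)) :=
          mul_le_mul_of_nonneg_left h (hq i).le
      _ = q i + s * (p i - q i) := by field_simp [(hq i).ne']
  calc ∑ i, q i * (p i / q i) ^ s ≤ ∑ i, (q i + s * (p i - q i)) :=
        Finset.sum_le_sum fun i _ => hbernoulli i
    _ = 1 := by
        rw [Finset.sum_add_distrib, ← Finset.mul_sum, Finset.sum_sub_distrib, hp1, hq1]
        ring

variable {X Y : Type*} {π πb r : X → Y → ℝ} {β : ℝ}

/-- The gap `Δ^r(x, y, y') = r(x, y) - r(x, y')`, as a random variable on triples `(x, y, y')`. -/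
def rewardGap (r : X → Y → ℝ) : X × Y × Y → ℝ := fun ω => r ω.1 ω.2.1 - r ω.1 ω.2.2

lemma IsImplicitReward.rewardGap_eq (hr : IsImplicitReward β πb π r) :
    rewardGap r = rewardGap (implicitReward β πb π) := by
  obtain ⟨b, hb⟩ := hr
  funext ω
  simp only [rewardGap, hb, add_sub_add_right_eq_sub]

variable [Fintype Y]

/-- The conditional expectation given the prompt `x` of the ratio `π(y|x) / π_base(y|x)` under
`y ∼ π(·|x)`; its `μ`-average is the paper's `C_π`. -/
noncomputable def promptCoverage (πb π : X → Y → ℝ) : X → ℝ := fun x =>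
  ∑ y, π x y * (π x y / πb x y)

/-- The conditional expectation given the prompt `x` of `(π_base(y|x) / π(y|x)) ^ β` under
`y ∼ π_base(·|x)`; its `μ`-average is the paper's `C^β(π_base‖π)`. -/
noncomputable def promptRpowCoverage (β : ℝ) (πb π : X → Y → ℝ) : X → ℝ := fun x =>
  ∑ y, πb x y * (πb x y / π x y) ^ β

variable [MeasurableSpace X]

lemma IsPositiveModel.exp_implicitReward (hb : IsPositiveModel πb) (h : IsPositiveModel π) (x : X)
    (y : Y) : Real.exp (implicitReward β πb π x y) = (π x y / πb x y) ^ β := by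
  rw [implicitReward, Real.rpow_def_of_pos (div_pos (h.pos x y) (hb.pos x y)), mul_comm]

lemma IsPositiveModel.exp_neg_implicitReward (hb : IsPositiveModel πb) (h : IsPositiveModel π)
    (x : X) (y : Y) : Real.exp (-implicitReward β πb π x y) = (πb x y / π x y) ^ β := by
  rw [Real.exp_neg, hb.exp_implicitReward h,
    ← Real.inv_rpow (div_pos (h.pos x y) (hb.pos x y)).le, inv_div]

lemma IsPositiveModel.sum_mul_exp_implicitReward_le_one (hb : IsPositiveModel πb)
    (h : IsPositiveModel π) (hβ : β ∈ Set.Icc (0 : ℝ) 1) (x : X) :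
    ∑ y, πb x y * Real.exp (implicitReward β πb π x y) ≤ 1 := by
  simp only [hb.exp_implicitReward h]
  exact sum_mul_div_rpow_le_one (fun y => (h.pos x y).le) (hb.pos x) (h.sum_eq_one x)
    (hb.sum_eq_one x) hβ.1 hβ.2

variable [MeasurableSpace Y] [MeasurableSingletonClass Y]

lemma IsPositiveModel.measurable_implicitReward (hb : IsPositiveModel πb) (h : IsPositiveModel π) :
    Measurable (Function.uncurry (implicitReward β πb π)) :=
  (h.measurable_uncurry.div hb.measurable_uncurry).log.const_mul β

variable {μ : Measure X}

lemma IsPositiveModel.integrable_exp_implicitReward [IsFiniteMeasure μ] (hb : IsPositiveModel πb)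
    (h : IsPositiveModel π) (hβ : β ∈ Set.Icc (0 : ℝ) 1) :
    Integrable (fun ω => Real.exp (Function.uncurry (implicitReward β πb π) ω))
      (responseLaw μ πb) := by
  have hm := (hb.measurable_implicitReward (β := β) h).exp
  rw [hb.integrable_responseLaw_iff hm fun _ => (Real.exp_pos _).le]
  refine (integrable_const (1 : ℝ)).mono' (Finset.measurable_sum _ fun y _ =>
    (hb.measurable y).mul (hm.comp measurable_prodMk_right)).aestronglyMeasurable
    (.of_forall fun x => ?_)
  rw [Real.norm_of_nonneg (Finset.sum_nonneg fun y _ =>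
    mul_nonneg (hb.pos x y).le (Real.exp_pos _).le)]
  exact hb.sum_mul_exp_implicitReward_le_one h hβ x

lemma IsPositiveModel.integral_exp_implicitReward_le_one [IsProbabilityMeasure μ]
    (hb : IsPositiveModel πb) (h : IsPositiveModel π) (hβ : β ∈ Set.Icc (0 : ℝ) 1) :
    ∫ ω, Real.exp (Function.uncurry (implicitReward β πb π) ω) ∂(responseLaw μ πb) ≤ 1 := by
  have hm := (hb.measurable_implicitReward (β := β) h).exp
  have hint := (hb.integrable_responseLaw_iff hm fun _ => (Real.exp_pos _).le).1
    (hb.integrable_exp_implicitReward (μ := μ) h hβ)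
  rw [hb.integral_responseLaw hm fun _ => (Real.exp_pos _).le]
  exact (integral_mono hint (integrable_const 1)
    (hb.sum_mul_exp_implicitReward_le_one h hβ)).trans (by simp)

lemma IsPositiveModel.integrable_exp_neg_implicitReward_iff [SFinite μ] (hb : IsPositiveModel πb)
    (h : IsPositiveModel π) :
    Integrable (fun ω => Real.exp (-Function.uncurry (implicitReward β πb π) ω))
      (responseLaw μ πb) ↔ Integrable (promptRpowCoverage β πb π) μ := by
  have hm : Measurable fun ω => Real.exp (-Function.uncurry (implicitReward β πb π) ω) :=
    (hb.measurable_implicitReward h).neg.exp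
  rw [hb.integrable_responseLaw_iff hm fun _ => (Real.exp_pos _).le]
  simp only [Function.uncurry_apply_pair, hb.exp_neg_implicitReward h]
  rfl

lemma IsPositiveModel.integral_exp_neg_implicitReward [SFinite μ] (hb : IsPositiveModel πb)
    (h : IsPositiveModel π) :
    ∫ ω, Real.exp (-Function.uncurry (implicitReward β πb π) ω) ∂(responseLaw μ πb) =
      μ[promptRpowCoverage β πb π] := by
  have hm : Measurable fun ω => Real.exp (-Function.uncurry (implicitReward β πb π) ω) :=
    (hb.measurable_implicitReward h).neg.exp
  rw [hb.integral_responseLaw hm fun _ => (Real.exp_pos _).le]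
  simp only [Function.uncurry_apply_pair, hb.exp_neg_implicitReward h]
  rfl

lemma IsPositiveModel.one_le_integral_promptRpowCoverage [IsProbabilityMeasure μ]
    (hb : IsPositiveModel πb) (h : IsPositiveModel π) (hβ : β ∈ Set.Icc (0 : ℝ) 1)
    (hC : Integrable (promptRpowCoverage β πb π) μ) : 1 ≤ μ[promptRpowCoverage β πb π] := by
  have := hb.isProbabilityMeasure_responseLaw (μ := μ)
  rw [← hb.integral_exp_neg_implicitReward h]
  exact one_le_integral_exp_neg (hb.integrable_exp_implicitReward h hβ)
    ((hb.integrable_exp_neg_implicitReward_iff h).2 hC)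
    (hb.integral_exp_implicitReward_le_one h hβ)

lemma IsPositiveModel.eLpNorm_four_implicitReward_le [IsProbabilityMeasure μ]
    (hb : IsPositiveModel πb) (h : IsPositiveModel π) (hβ : β ∈ Set.Icc (0 : ℝ) 1)
    (hC : Integrable (promptRpowCoverage β πb π) μ) :
    eLpNorm (Function.uncurry (implicitReward β πb π)) 4 (responseLaw μ πb) ≤
      ENNReal.ofReal (Real.log μ[promptRpowCoverage β πb π] + 3) := by
  have := hb.isProbabilityMeasure_responseLaw (μ := μ)
  rw [← hb.integral_exp_neg_implicitReward h]
  exact eLpNorm_four_le_log_integral_exp_neg (hb.measurable_implicitReward h).aestronglyMeasurable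
    (hb.integrable_exp_implicitReward h hβ)
    ((hb.integrable_exp_neg_implicitReward_iff h).2 hC)
    (hb.integral_exp_implicitReward_le_one h hβ)

lemma IsImplicitReward.measurable_rewardGap (hr : IsImplicitReward β πb π r)
    (hb : IsPositiveModel πb) (h : IsPositiveModel π) : Measurable (rewardGap r) := by
  rw [hr.rewardGap_eq]
  have hm := hb.measurable_implicitReward (β := β) h
  exact (hm.comp (measurable_id.prodMap measurable_fst)).sub
    (hm.comp (measurable_id.prodMap measurable_snd))

lemma IsImplicitReward.eLpNorm_four_rewardGap_le [IsProbabilityMeasure μ]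
    (hr : IsImplicitReward β πb π r) (hb : IsPositiveModel πb) (h : IsPositiveModel π)
    (hβ : β ∈ Set.Icc (0 : ℝ) 1) (hC : Integrable (promptRpowCoverage β πb π) μ) :
    eLpNorm (rewardGap r) 4 (responsePairLaw μ πb) ≤
      ENNReal.ofReal (2 * (Real.log μ[promptRpowCoverage β πb π] + 3)) := by
  have hZ := (hb.measurable_implicitReward (β := β) h).aestronglyMeasurable
    (μ := responseLaw μ πb)
  have hfst := hb.measurePreserving_fst_response (μ := μ)
  have hsnd := hb.measurePreserving_snd_response (μ := μ)
  have hle := hb.eLpNorm_four_implicitReward_le h hβ hC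
  calc eLpNorm (rewardGap r) 4 (responsePairLaw μ πb)
      = eLpNorm (Function.uncurry (implicitReward β πb π) ∘ Prod.map id Prod.fst -
          Function.uncurry (implicitReward β πb π) ∘ Prod.map id Prod.snd) 4
          (responsePairLaw μ πb) := by rw [hr.rewardGap_eq]; rfl
    _ ≤ _ := eLpNorm_sub_le (hZ.comp_measurePreserving hfst) (hZ.comp_measurePreserving hsnd)
          (by norm_num)
    _ ≤ 2 * ENNReal.ofReal (Real.log μ[promptRpowCoverage β πb π] + 3) := by
        rw [eLpNorm_comp_measurePreserving hZ hfst, eLpNorm_comp_measurePreserving hZ hsnd,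
          ← two_mul]
        gcongr
    _ = _ := by rw [ENNReal.ofReal_mul two_pos.le, ENNReal.ofReal_ofNat]

variable {ρ σ s : X → Y → ℝ}

lemma eLpNorm_four_rewardGap_sub_le [IsProbabilityMeasure μ] (hb : IsPositiveModel πb)
    (hρ : IsPositiveModel ρ) (hσ : IsPositiveModel σ) (hβ : β ∈ Set.Icc (0 : ℝ) 1)
    (hr : IsImplicitReward β πb ρ r) (hs : IsImplicitReward β πb σ s)
    (hCρ : Integrable (promptRpowCoverage β πb ρ) μ)
    (hCσ : Integrable (promptRpowCoverage β πb σ) μ) :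
    eLpNorm (rewardGap r - rewardGap s) 4 (responsePairLaw μ πb) ≤
      ENNReal.ofReal (12 * (1 + Real.log μ[promptRpowCoverage β πb σ] +
        Real.log μ[promptRpowCoverage β πb ρ])) := by
  have hlogρ := Real.log_nonneg (hb.one_le_integral_promptRpowCoverage hρ hβ hCρ)
  have hlogσ := Real.log_nonneg (hb.one_le_integral_promptRpowCoverage hσ hβ hCσ)
  calc _ ≤ _ := eLpNorm_sub_le (hr.measurable_rewardGap hb hρ).aestronglyMeasurable
        (hs.measurable_rewardGap hb hσ).aestronglyMeasurable (by norm_num)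
    _ ≤ _ := add_le_add (hr.eLpNorm_four_rewardGap_le hb hρ hβ hCρ)
        (hs.eLpNorm_four_rewardGap_le hb hσ hβ hCσ)
    _ ≤ _ := by
        rw [← ENNReal.ofReal_add (by positivity) (by positivity)]
        exact ENNReal.ofReal_le_ofReal (by linarith)

end Rewards

section Comparison

variable {X Y : Type*} [MeasurableSpace X] [Fintype Y] {μ : Measure X} {πb ρ σ p r s : X → Y → ℝ}
  {β : ℝ}

section LikelihoodRatio

lemma IsPositiveModel.promptCoverage_eq (hb : IsPositiveModel πb) (p : X → Y → ℝ) :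
    promptCoverage πb p = fun x => ∑ y, πb x y * (p x y / πb x y) ^ 2 := by
  funext x
  refine Finset.sum_congr rfl fun y _ => ?_
  field_simp [(hb.pos x y).ne']

variable [MeasurableSpace Y] [MeasurableSingletonClass Y]

lemma IsPositiveModel.measurable_div (hb : IsPositiveModel πb)
    (hp : ∀ y, Measurable fun x => p x y) : Measurable fun ω : X × Y => p ω.1 ω.2 / πb ω.1 ω.2 :=
  (measurable_from_prod_countable_left (f := Function.uncurry p) hp).div hb.measurable_uncurry

variable [SFinite μ]

lemma IsPositiveModel.memLp_two_div_iff (hb : IsPositiveModel πb)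
    (hp : ∀ y, Measurable fun x => p x y) :
    MemLp (fun ω => p ω.1 ω.2 / πb ω.1 ω.2) 2 (responseLaw μ πb) ↔
      Integrable (promptCoverage πb p) μ := by
  have hw := hb.measurable_div hp
  rw [memLp_two_iff_integrable_sq hw.aestronglyMeasurable,
    hb.integrable_responseLaw_iff (hw.pow_const 2) fun _ => sq_nonneg _, hb.promptCoverage_eq]

lemma IsPositiveModel.memLp_two_div_fst (hb : IsPositiveModel πb)
    (hp : ∀ y, Measurable fun x => p x y) (hC : Integrable (promptCoverage πb p) μ) :
    MemLp (fun ω : X × Y × Y => p ω.1 ω.2.1 / πb ω.1 ω.2.1) 2 (responsePairLaw μ πb) :=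
  ((hb.memLp_two_div_iff hp).2 hC).comp_measurePreserving hb.measurePreserving_fst_response

lemma IsPositiveModel.integral_div_fst_sq (hb : IsPositiveModel πb)
    (hp : ∀ y, Measurable fun x => p x y) :
    ∫ ω, (p ω.1 ω.2.1 / πb ω.1 ω.2.1) ^ 2 ∂(responsePairLaw μ πb) = μ[promptCoverage πb p] := by
  have hw := hb.measurable_div hp
  have hfst := hb.measurePreserving_fst_response (μ := μ)
  rw [hb.promptCoverage_eq, ← hb.integral_responseLaw (hw.pow_const 2) fun _ => sq_nonneg _,
    ← hfst.map_eq, integral_map hfst.aemeasurable (hw.pow_const 2).aestronglyMeasurable]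
  rfl

lemma IsPositiveModel.integral_div_fst_mul (hb : IsPositiveModel πb)
    (hp : ∀ y, Measurable fun x => p x y) (hp0 : ∀ x y, 0 ≤ p x y) {f : X × Y × Y → ℝ}
    (hf : Measurable f) (hf0 : 0 ≤ f) :
    ∫ ω, p ω.1 ω.2.1 / πb ω.1 ω.2.1 * f ω ∂(responsePairLaw μ πb) =
      ∫ x, ∑ y, ∑ y', p x y * πb x y' * f (x, y, y') ∂μ := by
  have hm : Measurable fun ω : X × Y × Y => p ω.1 ω.2.1 / πb ω.1 ω.2.1 :=
    (hb.measurable_div hp).comp (measurable_id.prodMap measurable_fst)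
  have hmf : Measurable fun ω => p ω.1 ω.2.1 / πb ω.1 ω.2.1 * f ω := hm.mul hf
  rw [hb.integral_responsePairLaw hmf fun ω =>
    mul_nonneg (div_nonneg (hp0 _ _) (hb.pos _ _).le) (hf0 ω)]
  congr! 4 with x y - y'
  field_simp [(hb.pos x y).ne']

end LikelihoodRatio

variable [IsProbabilityMeasure μ]

lemma IsPositiveModel.integral_div_mul_abs_rewardGap_sub_le [MeasurableSpace Y]
    [MeasurableSingletonClass Y] (hb : IsPositiveModel πb) (hρ : IsPositiveModel ρ)
    (hσ : IsPositiveModel σ) (hp : ∀ y, Measurable fun x => p x y) (hp0 : ∀ x y, 0 ≤ p x y)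
    (hβ : β ∈ Set.Icc (0 : ℝ) 1) (hr : IsImplicitReward β πb ρ r) (hs : IsImplicitReward β πb σ s)
    (hCp : Integrable (promptCoverage πb p) μ) (hCρ : Integrable (promptRpowCoverage β πb ρ) μ)
    (hCσ : Integrable (promptRpowCoverage β πb σ) μ) (η : ℝ) :
    ∫ ω, p ω.1 ω.2.1 / πb ω.1 ω.2.1 * |(rewardGap r - rewardGap s) ω| ∂(responsePairLaw μ πb) ≤
      √(μ[promptCoverage πb p]) *
        (√(∫ ω in {ω | |rewardGap r ω| ≤ η ∧ |rewardGap s ω| ≤ η},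
            (rewardGap r - rewardGap s) ω ^ 2 ∂(responsePairLaw μ πb)) +
          12 * (1 + Real.log μ[promptRpowCoverage β πb σ] +
              Real.log μ[promptRpowCoverage β πb ρ]) *
            ((responsePairLaw μ πb).real {ω | η < |rewardGap r ω|} +
              (responsePairLaw μ πb).real {ω | η < |rewardGap s ω|}) ^ (1 / 4 : ℝ)) := by
  have := hb.isProbabilityMeasure_responsePairLaw (μ := μ)
  have hmr := hr.measurable_rewardGap hb hρ
  have hms := hs.measurable_rewardGap hb hσ
  have hlogρ := Real.log_nonneg (hb.one_le_integral_promptRpowCoverage hρ hβ hCρ)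
  have hlogσ := Real.log_nonneg (hb.one_le_integral_promptRpowCoverage hσ hβ hCσ)
  have hnorm := eLpNorm_four_rewardGap_sub_le hb hρ hσ hβ hr hs hCρ hCσ
  have hD : MemLp (rewardGap r - rewardGap s) 4 (responsePairLaw μ πb) :=
    ⟨(hmr.sub hms).aestronglyMeasurable, hnorm.trans_lt ENNReal.ofReal_lt_top⟩
  have hw0 (ω : X × Y × Y) : 0 ≤ p ω.1 ω.2.1 / πb ω.1 ω.2.1 :=
    div_nonneg (hp0 _ _) (hb.pos _ _).le
  have hw := hb.memLp_two_div_fst hp hCp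
  calc _ ≤ _ := integral_mul_abs_sub_le_sqrt_mul hw0 hw hmr hms hD η
    _ ≤ _ := by
        rw [hb.integral_div_fst_sq hp]
        gcongr
        exact ENNReal.toReal_le_of_le_ofReal (by positivity) hnorm

theorem comparison_lemma_general (hb : IsPositiveModel πb)
    (hρ : IsPositiveModel ρ) (hσ : IsPositiveModel σ) (hp : ∀ y, Measurable fun x => p x y)
    (hp0 : ∀ x y, 0 ≤ p x y) (hβ : β ∈ Set.Icc (0 : ℝ) 1) (hr : IsImplicitReward β πb ρ r)
    (hs : IsImplicitReward β πb σ s) (hCp : Integrable (promptCoverage πb p) μ)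
    (hCρ : Integrable (promptRpowCoverage β πb ρ) μ)
    (hCσ : Integrable (promptRpowCoverage β πb σ) μ) (η : ℝ) :
    ∫ x, ∑ y, ∑ y', p x y * πb x y' * |rewardGap r (x, y, y') - rewardGap s (x, y, y')| ∂μ ≤
      12 * √(μ[promptCoverage πb p]) *
        √(∫ x, ∑ y, ∑ y', πb x y * πb x y' *
          ((rewardGap r (x, y, y') - rewardGap s (x, y, y')) ^ 2 *
            if |rewardGap r (x, y, y')| ≤ η ∧ |rewardGap s (x, y, y')| ≤ η then 1 else 0) ∂μ) +
      12 * √(μ[promptCoverage πb p]) * (1 + Real.log μ[promptRpowCoverage β πb σ] +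
          Real.log μ[promptRpowCoverage β πb ρ]) *
        ((∫ x, ∑ y, ∑ y', πb x y * πb x y' *
            (if η < |rewardGap r (x, y, y')| then 1 else 0) ∂μ) +
          ∫ x, ∑ y, ∑ y', πb x y * πb x y' *
            (if η < |rewardGap s (x, y, y')| then 1 else 0) ∂μ) ^ (1 / 4 : ℝ) := by
  let _ : MeasurableSpace Y := ⊤
  have hmr := hr.measurable_rewardGap hb hρ
  have hms := hs.measurable_rewardGap hb hσ
  have key := hb.integral_div_mul_abs_rewardGap_sub_le hρ hσ hp hp0 hβ hr hs hCp hCρ hCσ η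
  rw [hb.integral_div_fst_mul hp hp0 (hmr.sub hms).abs fun _ => abs_nonneg _,
    hb.setIntegral_responsePairLaw ((hmr.sub hms).pow_const 2) (fun _ => sq_nonneg _)
      (measurableSet_setOf_abs_le_and_abs_le hmr hms η),
    hb.responsePairLaw_real (measurableSet_lt measurable_const hmr.abs),
    hb.responsePairLaw_real (measurableSet_lt measurable_const hms.abs)] at key
  simp only [Pi.sub_apply, Set.mem_ofPred_eq] at key
  refine key.trans ?_
  rw [mul_add]
  gcongr ?_ + ?_
  · gcongr
    linarith [Real.sqrt_nonneg (μ[promptCoverage πb p])]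
  · exact le_of_eq (by ring)

end Comparison

/-- Comparison lemma: the on-policy expected absolute reward-difference gap is controlled
by a truncated second-moment term plus a tail term, with an absolute constant `c`. -/
theorem comparison_lemma :
    ∃ c : ℝ, 0 < c ∧
      ∀ (X : Type) [MeasurableSpace X] (μ : Measure X) [IsProbabilityMeasure μ]
        (Y : Type) [Fintype Y] [Nonempty Y]
        (pb : X → Y → ℝ), (∀ x y, 0 < pb x y) → (∀ x, ∑ y, pb x y = 1) →
        (∀ y, Measurable fun x => pb x y) →
        ∀ phat : X → Y → ℝ, (∀ x y, 0 < phat x y) → (∀ x, ∑ y, phat x y = 1) →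
        (∀ y, Measurable fun x => phat x y) →
        ∀ p : X → Y → ℝ, (∀ x y, 0 ≤ p x y) → (∀ x, ∑ y, p x y = 1) →
        (∀ y, Measurable fun x => p x y) →
        ∀ β : ℝ, β ∈ Set.Ioc (0 : ℝ) 1 →
        ∀ η : ℝ, 0 < η →
        let pstar : X → Y → ℝ := fun x y =>
          pb x y ^ (1 + 1 / β) / ∑ y', pb x y' ^ (1 + 1 / β)
        let rstar : X → Y → ℝ := fun x y => Real.log (pb x y)
        let rhat : X → Y → ℝ := fun x y => β * Real.log (phat x y / pb x y)
        let D : X → Y → Y → ℝ := fun x y y' =>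
          (rstar x y - rstar x y') - (rhat x y - rhat x y')
        let Cp : ℝ := ∫ x, ∑ y, p x y * (p x y / pb x y) ∂μ
        let CbHat : ℝ := ∫ x, ∑ y, pb x y * (pb x y / phat x y) ^ β ∂μ
        let CbStar : ℝ := ∫ x, ∑ y, pb x y * (pb x y / pstar x y) ^ β ∂μ
        let T2 : ℝ := ∫ x, ∑ y, ∑ y', pb x y * pb x y' *
            ((D x y y') ^ 2 *
              (if |rstar x y - rstar x y'| ≤ η ∧ |rhat x y - rhat x y'| ≤ η then 1 else 0)) ∂μ
        let Pstar : ℝ := ∫ x, ∑ y, ∑ y', pb x y * pb x y' *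
            (if η < |rstar x y - rstar x y'| then 1 else 0) ∂μ
        let Phat : ℝ := ∫ x, ∑ y, ∑ y', pb x y * pb x y' *
            (if η < |rhat x y - rhat x y'| then 1 else 0) ∂μ
        Integrable (fun x => ∑ y, ∑ y', p x y * pb x y' * |D x y y'|) μ →
        Integrable (fun x => ∑ y, p x y * (p x y / pb x y)) μ →
        Integrable (fun x => ∑ y, pb x y * (pb x y / phat x y) ^ β) μ →
        Integrable (fun x => ∑ y, pb x y * (pb x y / pstar x y) ^ β) μ →
        Integrable (fun x => ∑ y, ∑ y', pb x y * pb x y' *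
            ((D x y y') ^ 2 *
              (if |rstar x y - rstar x y'| ≤ η ∧ |rhat x y - rhat x y'| ≤ η then 1 else 0))) μ →
        (∫ x, ∑ y, ∑ y', p x y * pb x y' * |D x y y'| ∂μ)
          ≤ c * Real.sqrt Cp * Real.sqrt T2
            + c * Real.sqrt Cp * (1 + Real.log CbHat + Real.log CbStar) *
                (Pstar + Phat) ^ ((1 : ℝ) / 4) := by
  refine ⟨12, by norm_num, ?_⟩
  intro X _ μ _ Y _ _ pb hb hb1 hbm phat hσ hσ1 hσm p hp0 _ hpm β hβ η _ _ _ _ _ _ _ _ _ _ _ _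
    hCp hCσ hCρ _
  exact comparison_lemma_general ⟨hb, hb1, hbm⟩ (isPositiveModel_sharpenedModel hb hbm _)
    ⟨hσ, hσ1, hσm⟩ hpm hp0 (Set.Ioc_subset_Icc_self hβ)
    (isImplicitReward_log_sharpenedModel hb hβ.1.ne') (isImplicitReward_implicitReward _ _ _)
    hCp hCρ hCσ η
end

section
/- Let X be a prompt set, Y a finite response set, d ∈ ℕ, and φ : X × Y → ℝ^d a feature map with ‖φ(x,y)‖_2 ≤ 1 for all x, y. For θ ∈ ℝ^d define the linear softmax model π_θ(y|x) := exp(⟨φ(x,y), θ⟩)/Σ_{y'∈Y} exp(⟨φ(x,y'), θ⟩). Then for any B > 0 and any ε with 0 < ε ≤ 2B, there exists a finite set Θ ⊆ {θ ∈ ℝ^d : ‖θ‖_2 ≤ B} with |Θ| ≤ (6B/ε)^d such that for every θ with ‖θ‖_2 ≤ B there is θ' ∈ Θ with sup_{x∈X} max_{y∈Y} |log(π_θ(y|x)/π_{θ'}(y|x))| ≤ ε. That is, the linear softmax model class {π_θ : ‖θ‖_2 ≤ B} admits an ε-net of size (6B/ε)^d in the sup-log-ratio metric. -/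
open Finset
open scoped RealInnerProductSpace

/-!
Softmax is `2`-Lipschitz from the sup norm on logits to the sup-log-ratio metric, because
log-sum-exp is monotone and commutes with adding constants, hence is `1`-Lipschitz. Linear logits
with bounded features are Lipschitz in `θ`, so a net of the parameter ball yields a net of the model
class. A maximal separated subset of that ball is such a net, and comparing the volume of the
disjoint half-radius balls around its points with that of an enlarged ball bounds its size.
-/

section Packing

open MeasureTheory Metric Module
open scoped ENNReal NNReal

theorem pairwiseDisjoint_ball_of_isSeparated {X : Type*} [PseudoMetricSpace X] {ε : ℝ≥0}
    {C : Set X} (hC : IsSeparated ε C) : C.PairwiseDisjoint fun c ↦ ball c (ε / 2 : ℝ) := by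
  intro a ha b hb hab
  refine ball_disjoint_ball ?_
  have hlt : (ε : ℝ≥0∞) < edist a b := hC ha hb hab
  rw [edist_nndist, ENNReal.coe_lt_coe] at hlt
  rw [add_halves, dist_nndist]
  exact_mod_cast hlt.le

theorem packingNumber_mul_le_measure_thickening {X : Type*} [PseudoMetricSpace X]
    [MeasurableSpace X] [OpensMeasurableSpace X] {μ : Measure X} {ε : ℝ≥0} {A : Set X} {m : ℝ≥0∞}
    (hm : ∀ x ∈ A, m ≤ μ (ball x (ε / 2))) :
    (packingNumber ε A : ℝ≥0∞) * m ≤ μ (thickening (ε / 2) A) := by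
  simp only [packingNumber, ENat.toENNReal_iSup, ENNReal.iSup_mul, iSup_le_iff]
  intro C hCA hC
  calc (C.encard : ℝ≥0∞) * m = ∑' _ : C, m := (ENNReal.tsum_set_const C m).symm
    _ ≤ ∑' c : C, μ (ball (c : X) (ε / 2)) := ENNReal.tsum_le_tsum fun c ↦ hm c (hCA c.2)
    _ ≤ μ (⋃ c : C, ball (c : X) (ε / 2)) :=
      tsum_meas_le_meas_iUnion_of_disjoint μ (fun _ ↦ measurableSet_ball)
        ((pairwiseDisjoint_ball_of_isSeparated hC).subtype _ _)
    _ ≤ μ (thickening (ε / 2) A) :=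
      measure_mono <| Set.iUnion_subset fun c ↦ ball_subset_thickening (hCA c.2) _

variable {E : Type*} [NormedAddCommGroup E] [NormedSpace ℝ E] [FiniteDimensional ℝ E]

theorem packingNumber_closedBall_le (x : E) {R : ℝ} (hR : 0 ≤ R) {ε : ℝ≥0} (hε : 0 < ε) :
    (packingNumber ε (closedBall x R) : ℝ≥0∞) ≤
      ENNReal.ofReal ((1 + 2 * R / ε) ^ finrank ℝ E) := by
  borelize E
  let μ : Measure E := Measure.addHaar
  have hradius : ε / 2 + R = (1 + 2 * R / ε) * (ε / 2) := by field_simp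
  have hvol := calc
    (packingNumber ε (closedBall x R) : ℝ≥0∞) * μ (ball 0 (ε / 2))
      ≤ μ (thickening (ε / 2) (closedBall x R)) :=
        packingNumber_mul_le_measure_thickening fun c _ ↦ (μ.addHaar_ball_center c _).ge
    _ = ENNReal.ofReal ((1 + 2 * R / ε) ^ finrank ℝ E) * μ (ball 0 (ε / 2)) := by
        rw [thickening_closedBall (by positivity) hR, hradius,
          μ.addHaar_ball_mul_of_pos x (by positivity)]
  exact (ENNReal.mul_le_mul_iff_left (measure_ball_pos μ 0 (by positivity)).ne'
    measure_ball_lt_top.ne).1 hvol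

theorem exists_finset_net_closedBall (x : E) {R δ : ℝ} (hR : 0 ≤ R) (hδ : 0 < δ) :
    ∃ N : Finset E, (N : Set E) ⊆ closedBall x R ∧ (#N : ℝ) ≤ (1 + 2 * R / δ) ^ finrank ℝ E ∧
      ∀ y ∈ closedBall x R, ∃ c ∈ N, dist y c ≤ δ := by
  lift δ to ℝ≥0 using hδ.le
  have hcovering : (coveringNumber δ (closedBall x R) : ℝ≥0∞) ≤
      ENNReal.ofReal ((1 + 2 * R / δ) ^ finrank ℝ E) :=
    (ENat.toENNReal_mono (coveringNumber_le_packingNumber δ _)).trans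
      (packingNumber_closedBall_le x hR hδ)
  have hfinite : coveringNumber δ (closedBall x R) ≠ ⊤ := fun htop ↦ by
    simp [htop] at hcovering
  obtain ⟨N, hN, hNfin, hcover, hcard⟩ := exists_set_encard_eq_coveringNumber hfinite
  lift N to Finset E using hNfin
  refine ⟨N, hN, ?_, fun y hy ↦ ?_⟩
  · rw [← hcard, Set.encard_coe_eq_coe_finsetCard, ENat.toENNReal_coe] at hcovering
    simpa using ENNReal.toReal_le_of_le_ofReal (by positivity) hcovering
  · simpa using hcover.subset_iUnion_closedBall hy

end Packing

section Softmax

open scoped NNReal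

variable {Y : Type*} [Fintype Y]

/-- The log-partition function `log ∑ y, exp (f y)` of a vector of logits `f`. -/
noncomputable def logSumExp (f : Y → ℝ) : ℝ :=
  Real.log (∑ y, Real.exp (f y))

/-- The softmax distribution of a vector of logits `f`, as a real-valued function on `Y`. -/
noncomputable def softmax (f : Y → ℝ) (y : Y) : ℝ :=
  Real.exp (f y) / ∑ y', Real.exp (f y')

/-- The linear softmax model `π_θ(· | x)` of the parameter `θ`, where `v` is the feature vector
`φ x` of one fixed prompt `x`. -/
noncomputable def linearSoftmax {E : Type*} [NormedAddCommGroup E] [InnerProductSpace ℝ E]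
    (v : Y → E) (θ : E) : Y → ℝ :=
  softmax fun y ↦ ⟪v y, θ⟫

theorem sum_exp_pos [Nonempty Y] (f : Y → ℝ) : 0 < ∑ y, Real.exp (f y) :=
  Finset.sum_pos (fun _ _ ↦ Real.exp_pos _) univ_nonempty

theorem logSumExp_mono [Nonempty Y] : Monotone (logSumExp : (Y → ℝ) → ℝ) := fun f _ hfg ↦
  Real.log_le_log (sum_exp_pos f) <| sum_le_sum fun y _ ↦ Real.exp_le_exp.2 (hfg y)

theorem logSumExp_add_const [Nonempty Y] (f : Y → ℝ) (r : ℝ) :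
    logSumExp (fun y ↦ f y + r) = logSumExp f + r := by
  simp only [logSumExp, Real.exp_add, ← Finset.sum_mul]
  rw [Real.log_mul (sum_exp_pos f).ne' (Real.exp_pos r).ne', Real.log_exp]

theorem lipschitzWith_logSumExp [Nonempty Y] :
    LipschitzWith 1 (logSumExp : (Y → ℝ) → ℝ) :=
  LipschitzWith.of_le_add fun f g ↦ calc
    logSumExp f ≤ logSumExp fun y ↦ g y + dist f g := logSumExp_mono fun y ↦
      sub_le_iff_le_add'.1 <| (le_abs_self _).trans (dist_le_pi_dist f g y)
    _ = logSumExp g + dist f g := logSumExp_add_const g _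

theorem softmax_pos (f : Y → ℝ) (y : Y) : 0 < softmax f y :=
  have : Nonempty Y := ⟨y⟩
  div_pos (Real.exp_pos _) (sum_exp_pos f)

theorem log_softmax (f : Y → ℝ) (y : Y) : Real.log (softmax f y) = f y - logSumExp f := by
  have : Nonempty Y := ⟨y⟩
  rw [softmax, Real.log_div (Real.exp_pos _).ne' (sum_exp_pos f).ne', Real.log_exp, logSumExp]

theorem abs_log_softmax_div_softmax_le (f g : Y → ℝ) (y : Y) :
    |Real.log (softmax f y / softmax g y)| ≤ 2 * dist f g := by
  have : Nonempty Y := ⟨y⟩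
  have hlogSumExp : |logSumExp f - logSumExp g| ≤ dist f g := by
    simpa [Real.dist_eq] using lipschitzWith_logSumExp.dist_le_mul f g
  calc |Real.log (softmax f y / softmax g y)|
      = |(f y - g y) - (logSumExp f - logSumExp g)| := by
        rw [Real.log_div (softmax_pos f y).ne' (softmax_pos g y).ne', log_softmax, log_softmax,
          sub_sub_sub_comm]
    _ ≤ |f y - g y| + |logSumExp f - logSumExp g| := abs_sub _ _
    _ ≤ dist f g + dist f g := add_le_add (dist_le_pi_dist f g y) hlogSumExp
    _ = 2 * dist f g := (two_mul _).symm

variable {E : Type*} [NormedAddCommGroup E] [InnerProductSpace ℝ E]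

theorem lipschitzWith_inner_of_norm_le {v : Y → E} {L : ℝ≥0} (hv : ∀ y, ‖v y‖ ≤ L) :
    LipschitzWith L fun (θ : E) (y : Y) ↦ ⟪v y, θ⟫ :=
  LipschitzWith.of_dist_le_mul fun θ θ' ↦ (dist_pi_le_iff (by positivity)).2 fun y ↦ calc
    dist ⟪v y, θ⟫ ⟪v y, θ'⟫ = |⟪v y, θ - θ'⟫| := by rw [Real.dist_eq, inner_sub_right]
    _ ≤ ‖v y‖ * ‖θ - θ'‖ := abs_real_inner_le_norm _ _
    _ ≤ L * dist θ θ' := by rw [dist_eq_norm]; gcongr; exact hv y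

theorem abs_log_linearSoftmax_div_linearSoftmax_le {v : Y → E} {L : ℝ≥0} (hv : ∀ y, ‖v y‖ ≤ L)
    (θ θ' : E) (y : Y) :
    |Real.log (linearSoftmax v θ y / linearSoftmax v θ' y)| ≤ 2 * (L * dist θ θ') :=
  (abs_log_softmax_div_softmax_le _ _ y).trans <|
    mul_le_mul_of_nonneg_left ((lipschitzWith_inner_of_norm_le hv).dist_le_mul θ θ') zero_le_two

theorem softmax_class_covering_general {X : Type*} [FiniteDimensional ℝ E] {φ : X → Y → E}
    {L : ℝ≥0} (hL : 0 < L) (hφ : ∀ x y, ‖φ x y‖ ≤ L) {B ε : ℝ} (hB : 0 ≤ B) (hε : 0 < ε) :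
    ∃ Θ : Finset E, (∀ θ' ∈ Θ, ‖θ'‖ ≤ B) ∧
      (#Θ : ℝ) ≤ (1 + 4 * L * B / ε) ^ Module.finrank ℝ E ∧
      ∀ θ : E, ‖θ‖ ≤ B → ∃ θ' ∈ Θ, ∀ x y,
        |Real.log (linearSoftmax (φ x) θ y / linearSoftmax (φ x) θ' y)| ≤ ε := by
  obtain ⟨Θ, hΘ, hcard, hnet⟩ :=
    exists_finset_net_closedBall (0 : E) hB (δ := ε / (2 * L)) (by positivity)
  refine ⟨Θ, fun θ' hθ' ↦ mem_closedBall_zero_iff.1 (hΘ hθ'), ?_, fun θ hθ ↦ ?_⟩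
  · convert hcard using 3
    field_simp
    ring
  · obtain ⟨θ', hθ', hdist⟩ := hnet θ (mem_closedBall_zero_iff.2 hθ)
    refine ⟨θ', hθ', fun x y ↦ ?_⟩
    calc |Real.log (linearSoftmax (φ x) θ y / linearSoftmax (φ x) θ' y)|
        ≤ 2 * (L * dist θ θ') := abs_log_linearSoftmax_div_linearSoftmax_le (hφ x) θ θ' y
      _ ≤ 2 * (L * (ε / (2 * L))) := by gcongr
      _ = ε := by field_simp

end Softmax

/-- The linear softmax model class `{π_θ : ‖θ‖ ≤ B}` admits an `ε`-net of size
`(6B/ε)^d` in the sup-log-ratio metric. -/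
theorem softmax_class_covering
    {X : Type} {Y : Type} [Fintype Y] [Nonempty Y] (d : ℕ)
    (φ : X → Y → EuclideanSpace ℝ (Fin d)) (hφ : ∀ x y, ‖φ x y‖ ≤ 1)
    (B : ℝ) (hB : 0 < B) (ε : ℝ) (hε : 0 < ε) (hε2 : ε ≤ 2 * B) :
    ∃ Θ : Finset (EuclideanSpace ℝ (Fin d)),
      (∀ θ' ∈ Θ, ‖θ'‖ ≤ B) ∧
      (Θ.card : ℝ) ≤ (6 * B / ε) ^ d ∧
      ∀ θ : EuclideanSpace ℝ (Fin d), ‖θ‖ ≤ B →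
        ∃ θ' ∈ Θ, ∀ (x : X) (y : Y),
          |Real.log
              ((Real.exp ⟪φ x y, θ⟫ / ∑ y'', Real.exp ⟪φ x y'', θ⟫) /
                (Real.exp ⟪φ x y, θ'⟫ / ∑ y'', Real.exp ⟪φ x y'', θ'⟫))| ≤ ε := by
  obtain ⟨Θ, hΘ, hcard, hnet⟩ := softmax_class_covering_general one_pos hφ hB.le hε
  have hbase : 1 + 4 * ((1 : NNReal) : ℝ) * B / ε ≤ 6 * B / ε := by
    rw [NNReal.coe_one, le_div_iff₀ hε, add_mul, div_mul_cancel₀ _ hε.ne']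
    linarith
  rw [finrank_euclideanSpace_fin] at hcard
  exact ⟨Θ, hΘ, hcard.trans (by gcongr), hnet⟩
end
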